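/- For the elephant random walk with memory parameter p ∈ [0, 1) on a Cayley graph that is the d-regular tree T_d (d ≥ 3), if p ≤ p_d = (d + 1)/(2d) and m > 2, then there exists a constant C > 0 such that E|Ξ_n|^m ≤ C · n^{−1} for all n ≥ 1. -/

import Mathlib

open MeasureTheory ProbabilityTheory Filter

noncomputable section

/-- The Cayley graph of a group with respect to a finite set of generators. -/
def cayleyGraph {G : Type*} [Group G] (S : Finset G) : SimpleGraph G where
  Adj x y := x ≠ y ∧ (y * x⁻¹ ∈ S ∨ x * y⁻¹ ∈ S)
  symm := by
    constructor
    rintro x y ⟨h1, h2⟩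
    refine ⟨h1.symm, ?_⟩
    rcases h2 with h | h
    · exact Or.inr h
    · exact Or.inl h
  loopless := ⟨fun x h => h.1 rfl⟩

/-- The elephant random walk (ERW) with memory parameter `p` on the Cayley graph of a
group `G` with respect to a symmetric generating set `S` of cardinality `d`, not
containing the identity, whose Cayley graph is a tree (hence the `d`-regular tree
`T_d`).  The steps are `g 1, g 2, …` (the value of `g 0` is irrelevant).  The law of
the process is characterised by: `g 1` is uniform on `S`, and, conditionally on the
first `n` steps being `s 1, …, s n`, the next step `g (n+1)` equals `a ∈ S` with
probability `p * N/n + ((1-p)/(d-1)) * (n-N)/n`, where `N = #{1 ≤ k ≤ n : s k = a}`;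
this is precisely the probability that the walker, recalling a uniform past epoch
`D ∈ {1, …, n}`, repeats `g D` with probability `p` and takes any given other step
with probability `(1-p)/(d-1)`. -/
structure ERW (G : Type*) [Group G] [DecidableEq G] (d : ℕ) (p : ℝ)
    (Ω : Type*) [MeasurableSpace Ω] (P : Measure Ω) where
  S : Finset G
  card_S : S.card = d
  symm_S : ∀ s ∈ S, s⁻¹ ∈ S
  one_not_mem : (1 : G) ∉ S
  tree : (cayleyGraph S).IsTree
  g : ℕ → Ω → G
  meas_g : ∀ n a, MeasurableSet {ω | g n ω = a}
  mem_S : ∀ n, 1 ≤ n → ∀ ω, g n ω ∈ S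
  init : ∀ a ∈ S, (P {ω | g 1 ω = a}).toReal = 1 / d
  update : ∀ n, 1 ≤ n → ∀ s : ℕ → G, ∀ a ∈ S,
    (P ({ω | ∀ k ∈ Finset.Icc 1 n, g k ω = s k} ∩ {ω | g (n + 1) ω = a})).toReal
      = (p * ((((Finset.Icc 1 n).filter fun k => s k = a).card : ℝ) / n)
          + (1 - p) / ((d : ℝ) - 1)
            * (((n : ℝ) - (((Finset.Icc 1 n).filter fun k => s k = a).card : ℝ)) / n))
        * (P {ω | ∀ k ∈ Finset.Icc 1 n, g k ω = s k}).toReal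

namespace ERW

variable {G : Type*} [Group G] [DecidableEq G] {d : ℕ} {p : ℝ}
  {Ω : Type*} [MeasurableSpace Ω] {P : Measure Ω}

/-- The position `w n = g n ⋯ g 1` of the walk at time `n`. -/
def pos (E : ERW G d p Ω P) : ℕ → Ω → G
  | 0 => fun _ => 1
  | n + 1 => fun ω => E.g (n + 1) ω * E.pos n ω

/-- `Δ n`: the (word-metric) distance of the walker from the root at time `n`. -/
def dist (E : ERW G d p Ω P) (n : ℕ) (ω : Ω) : ℕ :=
  (cayleyGraph E.S).dist 1 (E.pos n ω)

/-- `N n a`: the number of `a`-steps taken by time `n`. -/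
def count (E : ERW G d p Ω P) (a : G) (n : ℕ) (ω : Ω) : ℕ :=
  ((Finset.Icc 1 n).filter fun k => E.g k ω = a).card

/-- `γ n`: the unique step decreasing the distance to the root by 1
(a junk value if the walker is at the root). -/
def gammaStep (E : ERW G d p Ω P) (n : ℕ) (ω : Ω) : G :=
  @Classical.epsilon G ⟨1⟩ fun s =>
    s ∈ E.S ∧ (cayleyGraph E.S).dist 1 (s * E.pos n ω) + 1 = E.dist n ω

/-- `ℓ n = N n (γ n)` if the walker is away from the root, and `0` otherwise. -/
def ell (E : ERW G d p Ω P) (n : ℕ) (ω : Ω) : ℕ :=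
  if E.pos n ω = 1 then 0 else E.count (E.gammaStep n ω) n ω

/-- `Ξ n = (1/n) ∑_{k=0}^{n-1} (ℓ k / k - 1(Δ k > 0)/d)` (with the convention
`ℓ 0 / 0 = 0`, automatic since division by zero yields zero). -/
def Xi (E : ERW G d p Ω P) (n : ℕ) (ω : Ω) : ℝ :=
  (1 / n) * ∑ k ∈ Finset.range n,
    ((E.ell k ω : ℝ) / k - (if 0 < E.dist k ω then 1 else 0) / d)

/-- The natural filtration `F n` generated by the steps up to time `n`. -/
def filt (E : ERW G d p Ω P) (n : ℕ) : MeasurableSpace Ω :=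
  ⨆ k ∈ Finset.Icc 1 n, MeasurableSpace.comap (E.g k) ⊤

/-- `G n = E[Δ (n+1) - Δ n | F n]`. -/
def drift (E : ERW G d p Ω P) (n : ℕ) : Ω → ℝ :=
  P[fun ω => ((E.dist (n + 1) ω : ℝ) - (E.dist n ω : ℝ)) | E.filt n]

/-- The martingale differences `Y k = Δ k - Δ (k-1) - G (k-1)`. -/
def mdiff (E : ERW G d p Ω P) (k : ℕ) (ω : Ω) : ℝ :=
  (E.dist k ω : ℝ) - (E.dist (k - 1) ω : ℝ) - E.drift (k - 1) ω

/-- The martingale `M n = ∑_{k=1}^n Y k`. -/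
def mart (E : ERW G d p Ω P) (n : ℕ) (ω : Ω) : ℝ :=
  ∑ k ∈ Finset.Icc 1 n, E.mdiff k ω

end ERW

/-- The rate `r n`: `√n` in the subcritical regime `p < p_d = (d+1)/(2d)`,
`√(n / log n)` in the critical regime `p = p_d`, and `n ^ (d(1-p)/(d-1))` in the
supercritical regime `p > p_d`. -/
def rate (p : ℝ) (d : ℕ) (n : ℕ) : ℝ :=
  if p < ((d : ℝ) + 1) / (2 * d) then Real.sqrt n
  else if p = ((d : ℝ) + 1) / (2 * d) then Real.sqrt ((n : ℝ) / Real.log n)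
  else (n : ℝ) ^ ((d : ℝ) * (1 - p) / ((d : ℝ) - 1))

/-!
Away from the root, `ℓ k / k - 1 / d` is the deviation from `1 / d` of the empirical frequency of
the step `γ k`, so by convexity it suffices that `∑ k, E |N k a / k - 1 / d| ^ m < ∞` for each
`a ∈ S`. The centred count `Z n = N n a - n / d` has conditional drift `α * Z n / n` with
`α = (p d - 1) / (d - 1)`, and `α ≤ 1 / 2` exactly when `p ≤ p_d`. Hence
`E (Z (n + 1)) ^ 2 ≤ (1 + 1 / n) E (Z n) ^ 2 + 1`, and a similar recursion with factor `1 + 2 / n`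
holds for the fourth moment, so that with `H n` the harmonic numbers `E (Z n) ^ 4 ≤ 4 (n H n) ^ 2`.
As the frequencies lie in `[0, 1]`, `m` may be lowered to `r = min m 4`, and Jensen's inequality
bounds the `r`-th moment of the deviation by `(2 H n / n) ^ (r / 2)`, which is summable since
`r > 2`.
-/

section CayleyGraph

lemma connected_exists_adj_dist_add_one_eq {V : Type*} {Γ : SimpleGraph V} (hΓ : Γ.Connected)
    {u v : V} (huv : u ≠ v) : ∃ w, Γ.Adj v w ∧ Γ.dist u w + 1 = Γ.dist u v := by
  obtain ⟨walk, hwalk⟩ := (hΓ.preconnected v u).exists_walk_length_eq_dist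
  cases walk with
  | nil => exact absurd rfl huv
  | @cons _ w _ hadj tail =>
    refine ⟨w, hadj, ?_⟩
    have h_tail : Γ.dist w u ≤ tail.length := SimpleGraph.dist_le tail
    have h_triangle : Γ.dist v u ≤ Γ.dist v w + Γ.dist w u := hΓ.dist_triangle
    rw [SimpleGraph.dist_eq_one_iff_adj.2 hadj] at h_triangle
    rw [SimpleGraph.Walk.length_cons] at hwalk
    rw [SimpleGraph.dist_comm (u := u), SimpleGraph.dist_comm (u := u)]
    omega

variable {G : Type*} [Group G] {S : Finset G}

lemma cayleyGraph_adj_iff_of_symm (hS : ∀ s ∈ S, s⁻¹ ∈ S) {x y : G} :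
    (cayleyGraph S).Adj x y ↔ x ≠ y ∧ y * x⁻¹ ∈ S := by
  refine and_congr_right fun _ => or_iff_left_of_imp fun h => ?_
  simpa using hS _ h

lemma cayleyGraph_exists_mem_dist_mul_add_one_eq (hS : ∀ s ∈ S, s⁻¹ ∈ S)
    (hconn : (cayleyGraph S).Connected) {x : G} (hx : x ≠ 1) :
    ∃ s ∈ S, (cayleyGraph S).dist 1 (s * x) + 1 = (cayleyGraph S).dist 1 x := by
  obtain ⟨y, hadj, hdist⟩ := connected_exists_adj_dist_add_one_eq hconn hx.symm
  exact ⟨y * x⁻¹, ((cayleyGraph_adj_iff_of_symm hS).1 hadj).2, by rwa [inv_mul_cancel_right]⟩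

end CayleyGraph

section RealInequalities

lemma abs_mean_rpow_le_mean_abs_rpow {ι : Type*} (s : Finset ι) (x : ι → ℝ) {m : ℝ}
    (hm : 1 ≤ m) :
    |1 / (s.card : ℝ) * ∑ i ∈ s, x i| ^ m ≤ 1 / (s.card : ℝ) * ∑ i ∈ s, |x i| ^ m := by
  rcases s.eq_empty_or_nonempty with rfl | hs
  · simp [Real.zero_rpow (by linarith : m ≠ 0)]
  have hcard : (s.card : ℝ) ≠ 0 := by exact_mod_cast hs.card_pos.ne'
  calc |1 / (s.card : ℝ) * ∑ i ∈ s, x i| ^ m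
      ≤ (∑ i ∈ s, 1 / (s.card : ℝ) * |x i|) ^ m := by
        rw [abs_mul, abs_of_nonneg (by positivity : 0 ≤ 1 / (s.card : ℝ)), ← Finset.mul_sum]
        gcongr
        exact Finset.abs_sum_le_sum_abs _ _
    _ ≤ ∑ i ∈ s, 1 / (s.card : ℝ) * |x i| ^ m :=
        Real.rpow_arith_mean_le_arith_mean_rpow s _ _ (fun _ _ => by positivity)
          (by rw [Finset.sum_const, nsmul_eq_mul, mul_one_div_cancel hcard])
          (fun _ _ => abs_nonneg _) hm
    _ = 1 / (s.card : ℝ) * ∑ i ∈ s, |x i| ^ m := (Finset.mul_sum _ _ _).symm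

lemma add_sq_le_of_abs_le_one {z x : ℝ} (hx : |x| ≤ 1) :
    (z + x) ^ 2 ≤ z ^ 2 + 2 * (z * x) + 1 := by
  linarith [(sq_le_one_iff_abs_le_one x).2 hx, add_sq z x]

lemma add_pow_four_le_of_abs_le_one {z x : ℝ} (hx : |x| ≤ 1) :
    (z + x) ^ 4 ≤ z ^ 4 + 4 * (z ^ 3 * x) + 8 * z ^ 2 + 3 := by
  have hx2 : x ^ 2 ≤ 1 := (sq_le_one_iff_abs_le_one x).2 hx
  have hx4 : x ^ 4 ≤ 1 := by nlinarith [sq_nonneg x]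
  have hzx : z ^ 2 * x ^ 2 ≤ z ^ 2 := mul_le_of_le_one_right (sq_nonneg z) hx2
  have hzx3 : 2 * (z * x ^ 3) ≤ z ^ 2 * x ^ 2 + x ^ 4 := by nlinarith [sq_nonneg (z * x - x ^ 2)]
  linarith [show (z + x) ^ 4 = z ^ 4 + 4 * (z ^ 3 * x) + 6 * (z ^ 2 * x ^ 2)
    + 4 * (z * x ^ 3) + x ^ 4 by ring]

end RealInequalities

section Harmonic

lemma cast_harmonic_nonneg (n : ℕ) : 0 ≤ (harmonic n : ℝ) := by
  rw [harmonic]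
  positivity

lemma harmonic_le_mul_rpow {ε : ℝ} (hε : 0 < ε) (n : ℕ) :
    (harmonic n : ℝ) ≤ (1 + 1 / ε) * (n : ℝ) ^ ε := by
  rcases n.eq_zero_or_pos with rfl | hn
  · simp [Real.zero_rpow hε.ne']
  calc (harmonic n : ℝ) ≤ 1 + Real.log n := harmonic_le_one_add_log n
    _ ≤ (n : ℝ) ^ ε + (n : ℝ) ^ ε / ε := by
        gcongr
        · exact Real.one_le_rpow (by exact_mod_cast hn) hε.le
        · exact Real.log_le_rpow_div n.cast_nonneg hε
    _ = (1 + 1 / ε) * (n : ℝ) ^ ε := by ring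

lemma summable_harmonic_div_rpow {q : ℝ} (hq : 1 < q) :
    Summable fun n : ℕ => ((harmonic n : ℝ) / n) ^ q := by
  obtain ⟨ε, hε⟩ : ∃ ε, ε = (q - 1) / (2 * q) := ⟨_, rfl⟩
  have hε0 : 0 < ε := hε ▸ div_pos (by linarith) (by linarith)
  have hexp : (ε - 1) * q = -((q + 1) / 2) := by
    rw [hε]
    field_simp
    ring
  have hmaj : Summable fun n : ℕ => (1 + 1 / ε) ^ q * (n : ℝ) ^ (-((q + 1) / 2)) :=
    (Real.summable_nat_rpow.2 (by linarith)).mul_left _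
  refine hmaj.of_nonneg_of_le
    (fun n => Real.rpow_nonneg (div_nonneg (cast_harmonic_nonneg n) n.cast_nonneg) q) fun n => ?_
  rcases n.eq_zero_or_pos with rfl | hn
  · simp only [Nat.cast_zero, div_zero, Real.zero_rpow (by linarith : q ≠ 0)]
    positivity
  have hn0 : (n : ℝ) ≠ 0 := by exact_mod_cast hn.ne'
  calc ((harmonic n : ℝ) / n) ^ q ≤ ((1 + 1 / ε) * (n : ℝ) ^ (ε - 1)) ^ q := by
        refine Real.rpow_le_rpow (div_nonneg (cast_harmonic_nonneg n) n.cast_nonneg) ?_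
          (by linarith)
        rw [Real.rpow_sub_one hn0, ← mul_div_assoc]
        gcongr
        exact harmonic_le_mul_rpow hε0 n
    _ = (1 + 1 / ε) ^ q * (n : ℝ) ^ (-((q + 1) / 2)) := by
        rw [Real.mul_rpow (by positivity) (by positivity), ← Real.rpow_mul n.cast_nonneg, hexp]

lemma le_mul_harmonic_of_succ_le {u : ℕ → ℝ} (h_one : u 1 ≤ 1)
    (h_succ : ∀ n, 1 ≤ n → u (n + 1) ≤ (1 + 1 / n) * u n + 1) {n : ℕ} (hn : 1 ≤ n) :
    u n ≤ n * harmonic n := by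
  induction n, hn using Nat.le_induction with
  | base => simpa [harmonic] using h_one
  | succ n hn ih =>
    have hn0 : (n : ℝ) ≠ 0 := by exact_mod_cast (by omega : n ≠ 0)
    calc u (n + 1) ≤ (1 + 1 / n) * u n + 1 := h_succ n hn
      _ ≤ (1 + 1 / n) * (n * harmonic n) + 1 := by gcongr
      _ = ((n + 1 : ℕ) : ℝ) * harmonic (n + 1) := by
          rw [harmonic_succ]
          push_cast
          field_simp

lemma le_sq_mul_harmonic_of_succ_le {u v : ℕ → ℝ} (hu : ∀ n, 1 ≤ n → u n ≤ n * harmonic n)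
    (h_one : v 1 ≤ 4)
    (h_succ : ∀ n, 1 ≤ n → v (n + 1) ≤ (1 + 2 / n) * v n + 8 * u n + 3) {n : ℕ} (hn : 1 ≤ n) :
    v n ≤ 4 * (n * harmonic n) ^ 2 := by
  induction n, hn using Nat.le_induction with
  | base => simpa [harmonic] using h_one
  | succ n hn ih =>
    have hn0 : (n : ℝ) ≠ 0 := by exact_mod_cast (by omega : n ≠ 0)
    have hH : (0 : ℝ) ≤ harmonic n := cast_harmonic_nonneg n
    calc v (n + 1) ≤ (1 + 2 / n) * v n + 8 * u n + 3 := h_succ n hn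
      _ ≤ (1 + 2 / n) * (4 * (n * harmonic n) ^ 2) + 8 * (n * harmonic n) + 3 := by
          gcongr
          exact hu n hn
      _ = 4 * (n ^ 2 + 2 * n) * (harmonic n : ℝ) ^ 2 + 8 * n * harmonic n + 3 := by
          field_simp
      _ ≤ 4 * ((n + 1) * harmonic n + 1) ^ 2 := by nlinarith
      _ = 4 * (((n + 1 : ℕ) : ℝ) * harmonic (n + 1)) ^ 2 := by
          rw [harmonic_succ]
          push_cast
          field_simp

end Harmonic

section Moments

variable {Ω : Type*} [MeasurableSpace Ω] {μ : Measure Ω}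

lemma memLp_of_factorsThrough_finite [IsFiniteMeasure μ] {α : Type*} [Finite α] {h : Ω → α}
    (hh : ∀ s, MeasurableSet (h ⁻¹' {s})) {f : Ω → ℝ} (hf : f.FactorsThrough h)
    (q : ENNReal) : MemLp f q μ := by
  obtain ⟨φ, rfl⟩ := (Function.factorsThrough_iff f).1 hf
  let _ : MeasurableSpace α := ⊤
  obtain ⟨C, hC⟩ := Finite.exists_le fun s => ‖φ s‖
  exact .of_bound
    ((measurable_from_top (f := φ)).comp (measurable_to_countable' hh)).aestronglyMeasurable C
    (.of_forall fun ω => hC (h ω))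

lemma integral_comp_eq_sum_fiber [IsFiniteMeasure μ] {α : Type*} [Fintype α] {h : Ω → α}
    (hh : ∀ s, MeasurableSet (h ⁻¹' {s})) (φ : α → ℝ) :
    ∫ ω, φ (h ω) ∂μ = ∑ s, μ.real (h ⁻¹' {s}) * φ s := by
  let _ : MeasurableSpace α := ⊤
  have h_meas : Measurable h := measurable_to_countable' hh
  rw [← integral_map h_meas.aemeasurable measurable_from_top.aestronglyMeasurable,
    integral_fintype .of_finite]
  refine Finset.sum_congr rfl fun s _ => ?_
  rw [map_measureReal_apply h_meas (measurableSet_singleton s), smul_eq_mul]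

lemma integrable_pow_of_memLp [IsFiniteMeasure μ] {f : Ω → ℝ} {q : ENNReal} (hf : MemLp f q μ)
    {k : ℕ} (hk : k ≤ q) : Integrable (fun ω => f ω ^ k) μ := by
  refine (integrable_norm_iff (hf.aestronglyMeasurable.pow k)).1 ?_
  simpa only [Pi.pow_apply, norm_pow] using (hf.mono_exponent hk).integrable_norm_pow'

variable [IsProbabilityMeasure μ]

lemma integral_rpow_le_rpow_integral {f : Ω → ℝ} (hf : 0 ≤ f) (hfi : Integrable f μ) {q : ℝ}
    (hq0 : 0 ≤ q) (hq1 : q ≤ 1) : ∫ ω, f ω ^ q ∂μ ≤ (∫ ω, f ω ∂μ) ^ q := by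
  by_cases hint : Integrable (fun ω => f ω ^ q) μ
  · exact (Real.concaveOn_rpow hq0 hq1).le_map_integral
      (Real.continuous_rpow_const hq0).continuousOn isClosed_Ici (.of_forall hf) hfi hint
  · rw [integral_undef hint]
    exact Real.rpow_nonneg (integral_nonneg hf) q

lemma integral_abs_rpow_le_of_abs_le_one {f : Ω → ℝ} (hf : MemLp f 4 μ) (hf1 : ∀ ω, |f ω| ≤ 1)
    {r m : ℝ} (hr0 : 0 ≤ r) (hr4 : r ≤ 4) (hrm : r ≤ m) :
    ∫ ω, |f ω| ^ m ∂μ ≤ (∫ ω, f ω ^ 4 ∂μ) ^ (r / 4) := by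
  have hpow : ∀ ω, |f ω| ^ r = (f ω ^ 4) ^ (r / 4) := fun ω => by
    rw [← Even.pow_abs (by decide : Even 4), ← Real.rpow_natCast, ← Real.rpow_mul (abs_nonneg _)]
    congr 1
    push_cast
    ring
  have hr_int : Integrable (fun ω => |f ω| ^ r) μ :=
    .of_bound (hf.aestronglyMeasurable.aemeasurable.abs.pow_const r).aestronglyMeasurable 1
      (.of_forall fun ω => by
        rw [Real.norm_of_nonneg (by positivity)]
        exact Real.rpow_le_one (abs_nonneg _) (hf1 ω) hr0)
  calc ∫ ω, |f ω| ^ m ∂μ ≤ ∫ ω, |f ω| ^ r ∂μ :=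
        integral_mono_of_nonneg (.of_forall fun ω => by positivity) hr_int
          (.of_forall fun ω => Real.rpow_le_rpow_of_exponent_ge' (abs_nonneg _) (hf1 ω) hr0 hrm)
    _ = ∫ ω, (f ω ^ 4) ^ (r / 4) ∂μ := by simp_rw [hpow]
    _ ≤ (∫ ω, f ω ^ 4 ∂μ) ^ (r / 4) :=
        integral_rpow_le_rpow_integral (fun ω => Even.pow_nonneg (by decide) (f ω))
          (integrable_pow_of_memLp hf le_rfl) (by linarith) (by linarith)

variable {Z ξ : Ω → ℝ}

lemma integral_add_sq_le (hZ : MemLp Z 2 μ) (hξ : AEStronglyMeasurable ξ μ)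
    (hξ1 : ∀ ω, |ξ ω| ≤ 1) :
    ∫ ω, (Z ω + ξ ω) ^ 2 ∂μ ≤ ∫ ω, Z ω ^ 2 ∂μ + 2 * ∫ ω, Z ω * ξ ω ∂μ + 1 := by
  have hZ2 : Integrable (fun ω => Z ω ^ 2) μ := integrable_pow_of_memLp hZ le_rfl
  have hZξ : Integrable (fun ω => 2 * (Z ω * ξ ω)) μ :=
    ((hZ.integrable (by norm_num)).mul_bdd hξ (.of_forall hξ1)).const_mul 2
  have h_sum : Integrable (fun ω => Z ω ^ 2 + 2 * (Z ω * ξ ω)) μ := hZ2.add hZξ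
  calc ∫ ω, (Z ω + ξ ω) ^ 2 ∂μ ≤ ∫ ω, (Z ω ^ 2 + 2 * (Z ω * ξ ω) + 1) ∂μ :=
        integral_mono_of_nonneg (.of_forall fun ω => by positivity)
          (h_sum.add (integrable_const 1))
          (.of_forall fun ω => add_sq_le_of_abs_le_one (hξ1 ω))
    _ = ∫ ω, Z ω ^ 2 ∂μ + 2 * ∫ ω, Z ω * ξ ω ∂μ + 1 := by
        rw [integral_add h_sum (integrable_const 1), integral_add hZ2 hZξ,
          integral_const_mul, integral_const, probReal_univ, one_smul]

lemma integral_add_pow_four_le (hZ : MemLp Z 4 μ) (hξ : AEStronglyMeasurable ξ μ)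
    (hξ1 : ∀ ω, |ξ ω| ≤ 1) :
    ∫ ω, (Z ω + ξ ω) ^ 4 ∂μ
      ≤ ∫ ω, Z ω ^ 4 ∂μ + 4 * ∫ ω, Z ω ^ 3 * ξ ω ∂μ + 8 * ∫ ω, Z ω ^ 2 ∂μ + 3 := by
  have hZ4 : Integrable (fun ω => Z ω ^ 4) μ := integrable_pow_of_memLp hZ le_rfl
  have hZ3ξ : Integrable (fun ω => 4 * (Z ω ^ 3 * ξ ω)) μ :=
    ((integrable_pow_of_memLp hZ (by norm_num)).mul_bdd hξ (.of_forall hξ1)).const_mul 4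
  have hZ2 : Integrable (fun ω => 8 * Z ω ^ 2) μ :=
    (integrable_pow_of_memLp hZ (by norm_num)).const_mul 8
  have h_sum₂ : Integrable (fun ω => Z ω ^ 4 + 4 * (Z ω ^ 3 * ξ ω)) μ := hZ4.add hZ3ξ
  have h_sum₃ : Integrable (fun ω => Z ω ^ 4 + 4 * (Z ω ^ 3 * ξ ω) + 8 * Z ω ^ 2) μ :=
    h_sum₂.add hZ2
  calc ∫ ω, (Z ω + ξ ω) ^ 4 ∂μ
      ≤ ∫ ω, (Z ω ^ 4 + 4 * (Z ω ^ 3 * ξ ω) + 8 * Z ω ^ 2 + 3) ∂μ :=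
        integral_mono_of_nonneg (.of_forall fun ω => by positivity)
          (h_sum₃.add (integrable_const 3))
          (.of_forall fun ω => add_pow_four_le_of_abs_le_one (hξ1 ω))
    _ = ∫ ω, Z ω ^ 4 ∂μ + 4 * ∫ ω, Z ω ^ 3 * ξ ω ∂μ + 8 * ∫ ω, Z ω ^ 2 ∂μ + 3 := by
        rw [integral_add h_sum₃ (integrable_const 3), integral_add h_sum₂ hZ2,
          integral_add hZ4 hZ3ξ, integral_const_mul,
          integral_const_mul, integral_const, probReal_univ, one_smul]

end Moments

namespace ERW

/-- The coefficient `α = (p d - 1) / (d - 1)` of the linear drift of the centred step counts: the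
conditional mean of `centeredCount a (n + 1)` given the first `n` steps is
`(1 + α / n) * centeredCount a n`. -/
def driftCoeff (d : ℕ) (p : ℝ) : ℝ := (p * d - 1) / (d - 1)

lemma driftCoeff_le_half {d : ℕ} {p : ℝ} (hd : 2 ≤ d) (hpd : p ≤ ((d : ℝ) + 1) / (2 * d)) :
    driftCoeff d p ≤ 1 / 2 := by
  have hd2 : (2 : ℝ) ≤ d := by exact_mod_cast hd
  rw [le_div_iff₀ (by linarith)] at hpd
  rw [driftCoeff, div_le_div_iff₀ (by linarith) (by norm_num)]
  linarith

variable {G : Type*} [Group G] [DecidableEq G] {d : ℕ} {p : ℝ}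
  {Ω : Type*} [MeasurableSpace Ω] {P : Measure Ω} (E : ERW G d p Ω P)

/-- The centred count `Z n = N n a - n / d`. -/
def centeredCount (a : G) (n : ℕ) (ω : Ω) : ℝ := E.count a n ω - n / d

/-- The increment `1(g (n + 1) = a) - 1 / d` of the centred count from time `n` to `n + 1`. -/
def stepDev (a : G) (n : ℕ) (ω : Ω) : ℝ := (if E.g (n + 1) ω = a then 1 else 0) - 1 / d

/-- The deviation `N n a / n - 1 / d` of the empirical frequency of `a` from `1 / d`, written so
that it is `0` at time `0`. -/
def freqDev (a : G) (n : ℕ) (ω : Ω) : ℝ := E.centeredCount a n ω / n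

/-- The summand `ℓ k / k - 1(Δ k > 0) / d` of `Xi`. -/
def excess (k : ℕ) (ω : Ω) : ℝ :=
  (E.ell k ω : ℝ) / k - (if 0 < E.dist k ω then 1 else 0) / d

/-- The conditional probability, given the first `n` steps, that step `n + 1` is `a`. -/
def stepProb (a : G) (n : ℕ) (ω : Ω) : ℝ :=
  p * ((E.count a n ω : ℝ) / n) + (1 - p) / ((d : ℝ) - 1) * (((n : ℝ) - E.count a n ω) / n)

/-- The first `n` steps of the walk, as an element of a finite type. -/
def history (n : ℕ) (ω : Ω) : Finset.Icc 1 n → E.S :=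
  fun k => ⟨E.g k ω, E.mem_S k (Finset.mem_Icc.1 k.2).1 ω⟩

section Pathwise

lemma count_succ (a : G) (n : ℕ) (ω : Ω) :
    E.count a (n + 1) ω = E.count a n ω + if E.g (n + 1) ω = a then 1 else 0 := by
  rw [count, count, ← Finset.insert_Icc_right_eq_Icc_add_one (by omega : 1 ≤ n + 1),
    Finset.filter_insert]
  split_ifs with h
  · rw [Finset.card_insert_of_notMem (by simp)]
  · rfl

lemma centeredCount_succ (a : G) (n : ℕ) (ω : Ω) :
    E.centeredCount a (n + 1) ω = E.centeredCount a n ω + E.stepDev a n ω := by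
  simp only [centeredCount, stepDev, E.count_succ]
  push_cast
  ring

lemma count_le (a : G) (n : ℕ) (ω : Ω) : E.count a n ω ≤ n :=
  (Finset.card_filter_le _ _).trans (Nat.card_Icc 1 n).le

lemma abs_centeredCount_le (a : G) (n : ℕ) (ω : Ω) : |E.centeredCount a n ω| ≤ n := by
  have h_count : (E.count a n ω : ℝ) ≤ n := by exact_mod_cast E.count_le a n ω
  have h_mean : (n : ℝ) / d ≤ n := mul_le_of_le_one_right n.cast_nonneg d.cast_inv_le_one
  exact abs_sub_le_of_nonneg_of_le (Nat.cast_nonneg _) h_count (by positivity) h_mean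

lemma abs_freqDev_le_one (a : G) (n : ℕ) (ω : Ω) : |E.freqDev a n ω| ≤ 1 := by
  rw [freqDev, abs_div, Nat.abs_cast]
  exact div_le_one_of_le₀ (E.abs_centeredCount_le a n ω) n.cast_nonneg

lemma abs_stepDev_le_one (a : G) (n : ℕ) (ω : Ω) : |E.stepDev a n ω| ≤ 1 := by
  refine abs_sub_le_of_nonneg_of_le ?_ ?_ (by positivity) (one_div (d : ℝ) ▸ d.cast_inv_le_one) <;>
    split_ifs <;> norm_num

lemma gammaStep_mem {n : ℕ} {ω : Ω} (h : E.pos n ω ≠ 1) : E.gammaStep n ω ∈ E.S :=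
  (Classical.epsilon_spec
    (cayleyGraph_exists_mem_dist_mul_add_one_eq E.symm_S E.tree.connected h)).1

lemma excess_eq_zero {k : ℕ} {ω : Ω} (h : E.pos k ω = 1) : E.excess k ω = 0 := by
  simp [excess, ell, ERW.dist, h]

lemma excess_eq_freqDev {k : ℕ} {ω : Ω} (h : E.pos k ω ≠ 1) :
    E.excess k ω = E.freqDev (E.gammaStep k ω) k ω := by
  have hk : (k : ℝ) ≠ 0 := by
    intro hk
    obtain rfl : k = 0 := by exact_mod_cast hk
    exact h rfl
  have hdist : 0 < E.dist k ω := E.tree.connected.pos_dist_of_ne h.symm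
  rw [excess, ell, if_neg h, if_pos hdist, freqDev, centeredCount]
  field_simp

lemma abs_excess_rpow_le_sum (k : ℕ) (ω : Ω) {m : ℝ} (hm : 0 < m) :
    |E.excess k ω| ^ m ≤ ∑ a ∈ E.S, |E.freqDev a k ω| ^ m := by
  by_cases h : E.pos k ω = 1
  · rw [E.excess_eq_zero h, abs_zero, Real.zero_rpow hm.ne']
    positivity
  · rw [E.excess_eq_freqDev h]
    exact Finset.single_le_sum (f := fun a => |E.freqDev a k ω| ^ m)
      (fun _ _ => by positivity) (E.gammaStep_mem h)

lemma abs_Xi_rpow_le (n : ℕ) (ω : Ω) {m : ℝ} (hm : 1 ≤ m) :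
    |E.Xi n ω| ^ m ≤ 1 / n * ∑ k ∈ Finset.range n, ∑ a ∈ E.S, |E.freqDev a k ω| ^ m := by
  have h_mean := abs_mean_rpow_le_mean_abs_rpow (Finset.range n) (E.excess · ω) hm
  rw [Finset.card_range] at h_mean
  refine h_mean.trans ?_
  gcongr with k
  exact E.abs_excess_rpow_le_sum k ω (by linarith)

end Pathwise

section OneStep

lemma measurableSet_history_fiber (n : ℕ) (s : Finset.Icc 1 n → E.S) :
    MeasurableSet (E.history n ⁻¹' {s}) := by
  have h_eq : E.history n ⁻¹' {s} = ⋂ k : Finset.Icc 1 n, {ω | E.g k ω = s k} := by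
    ext ω
    simp [history, funext_iff, Subtype.ext_iff]
  rw [h_eq]
  exact .iInter fun k => E.meas_g k (s k)

lemma history_fiber_eq_cylinder (n : ℕ) (ω₀ : Ω) :
    E.history n ⁻¹' {E.history n ω₀} = {ω | ∀ k ∈ Finset.Icc 1 n, E.g k ω = E.g k ω₀} := by
  ext ω
  simp [history, funext_iff]

lemma count_factorsThrough_history (a : G) (n : ℕ) :
    (E.count a n).FactorsThrough (E.history n) := by
  intro ω ω₀ h
  have h_steps : ω ∈ E.history n ⁻¹' {E.history n ω₀} := h
  rw [history_fiber_eq_cylinder] at h_steps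
  exact congrArg Finset.card (Finset.filter_congr fun k hk => by rw [h_steps k hk])

lemma centeredCount_factorsThrough_history (a : G) (n : ℕ) :
    (E.centeredCount a n).FactorsThrough (E.history n) :=
  (E.count_factorsThrough_history a n).comp_left fun c => (c : ℝ) - n / d

lemma stepProb_factorsThrough_history (a : G) (n : ℕ) :
    (E.stepProb a n).FactorsThrough (E.history n) :=
  (E.count_factorsThrough_history a n).comp_left fun c =>
    p * ((c : ℝ) / n) + (1 - p) / ((d : ℝ) - 1) * (((n : ℝ) - c) / n)

lemma measureReal_history_fiber_inter_step {n : ℕ} (hn : 1 ≤ n) {a : G} (ha : a ∈ E.S) (ω₀ : Ω) :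
    P.real (E.history n ⁻¹' {E.history n ω₀} ∩ {ω | E.g (n + 1) ω = a})
      = E.stepProb a n ω₀ * P.real (E.history n ⁻¹' {E.history n ω₀}) := by
  rw [history_fiber_eq_cylinder]
  exact E.update n hn (E.g · ω₀) a ha

lemma stepProb_eq (hd : 2 ≤ d) {n : ℕ} (hn : 1 ≤ n) (a : G) (ω : Ω) :
    E.stepProb a n ω = 1 / d + driftCoeff d p / n * E.centeredCount a n ω := by
  have hd2 : (2 : ℝ) ≤ d := by exact_mod_cast hd
  have hd0 : (d : ℝ) ≠ 0 := by linarith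
  have hd1 : (d : ℝ) - 1 ≠ 0 := by linarith
  have hn0 : (n : ℝ) ≠ 0 := by exact_mod_cast (by omega : n ≠ 0)
  rw [stepProb, driftCoeff, centeredCount]
  field_simp
  ring

lemma aestronglyMeasurable_stepDev (a : G) (n : ℕ) : AEStronglyMeasurable (E.stepDev a n) P :=
  ((Measurable.ite (E.meas_g (n + 1) a) measurable_const measurable_const).sub_const
    _).aestronglyMeasurable

variable [IsProbabilityMeasure P]

lemma memLp_centeredCount (a : G) (n : ℕ) (q : ENNReal) : MemLp (E.centeredCount a n) q P :=
  memLp_of_factorsThrough_finite (E.measurableSet_history_fiber n)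
    (E.centeredCount_factorsThrough_history a n) q

lemma setIntegral_step_eq_integral_mul_stepProb {n : ℕ} (hn : 1 ≤ n) {a : G} (ha : a ∈ E.S)
    {f : Ω → ℝ} (hf : f.FactorsThrough (E.history n)) :
    ∫ ω in {ω | E.g (n + 1) ω = a}, f ω ∂P = ∫ ω, f ω * E.stepProb a n ω ∂P := by
  obtain ⟨φ, rfl⟩ := (Function.factorsThrough_iff f).1 hf
  obtain ⟨ψ, hψ⟩ :=
    (Function.factorsThrough_iff (E.stepProb a n)).1 (E.stepProb_factorsThrough_history a n)
  have h_fiber : ∀ s, P.real (E.history n ⁻¹' {s} ∩ {ω | E.g (n + 1) ω = a})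
      = ψ s * P.real (E.history n ⁻¹' {s}) := fun s => by
    rcases (E.history n ⁻¹' {s}).eq_empty_or_nonempty with h_empty | ⟨ω₀, rfl⟩
    · simp [h_empty]
    · rw [E.measureReal_history_fiber_inter_step hn ha, hψ, Function.comp_apply]
  rw [hψ]
  simp only [Function.comp_apply]
  rw [integral_comp_eq_sum_fiber (E.measurableSet_history_fiber n) φ,
    integral_comp_eq_sum_fiber (E.measurableSet_history_fiber n) (fun s => φ s * ψ s)]
  refine Finset.sum_congr rfl fun s _ => ?_
  rw [measureReal_restrict_apply (E.measurableSet_history_fiber n s), h_fiber]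
  ring

lemma integral_mul_stepDev (hd : 2 ≤ d) {n : ℕ} (hn : 1 ≤ n) {a : G} (ha : a ∈ E.S)
    {f : Ω → ℝ} (hf : f.FactorsThrough (E.history n)) :
    ∫ ω, f ω * E.stepDev a n ω ∂P
      = driftCoeff d p / n * ∫ ω, f ω * E.centeredCount a n ω ∂P := by
  have hf_int : Integrable f P :=
    (memLp_of_factorsThrough_finite (E.measurableSet_history_fiber n) hf 1).integrable le_rfl
  have hfZ_int : Integrable (fun ω => f ω * E.centeredCount a n ω) P :=
    hf_int.mul_bdd (E.memLp_centeredCount a n 1).aestronglyMeasurable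
      (.of_forall (E.abs_centeredCount_le a n))
  have hstep : ∀ ω, f ω * E.stepDev a n ω
      = {ω | E.g (n + 1) ω = a}.indicator f ω - f ω * (1 / d) := fun ω => by
    by_cases h : E.g (n + 1) ω = a <;> simp [stepDev, h, mul_sub]
  calc ∫ ω, f ω * E.stepDev a n ω ∂P
      = ∫ ω, f ω * E.stepProb a n ω ∂P - ∫ ω, f ω * (1 / d) ∂P := by
        simp_rw [hstep]
        rw [integral_sub (hf_int.indicator (E.meas_g (n + 1) a)) (hf_int.mul_const _),
          integral_indicator (E.meas_g (n + 1) a),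
          E.setIntegral_step_eq_integral_mul_stepProb hn ha hf]
    _ = driftCoeff d p / n * ∫ ω, f ω * E.centeredCount a n ω ∂P := by
        simp_rw [E.stepProb_eq hd hn, mul_add]
        rw [integral_add (hf_int.mul_const _), add_sub_cancel_left, ← integral_const_mul]
        · simp_rw [mul_left_comm]
        · simpa only [mul_left_comm] using hfZ_int.const_mul (driftCoeff d p / n)

end OneStep

section Moments

variable [IsProbabilityMeasure P]

lemma integral_centeredCount_one_pow_le_one (a : G) (j : ℕ) :
    ∫ ω, E.centeredCount a 1 ω ^ j ∂P ≤ 1 := by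
  have h_le : ∀ ω, ‖E.centeredCount a 1 ω ^ j‖ ≤ 1 := fun ω => by
    rw [norm_pow]
    exact pow_le_one₀ (norm_nonneg _) (by simpa using E.abs_centeredCount_le a 1 ω)
  simpa using (le_abs_self _).trans (norm_integral_le_of_norm_le_const (μ := P) (.of_forall h_le))

lemma integral_centeredCount_sq_succ_le (hd : 2 ≤ d) (hpd : p ≤ ((d : ℝ) + 1) / (2 * d))
    {n : ℕ} (hn : 1 ≤ n) {a : G} (ha : a ∈ E.S) :
    ∫ ω, E.centeredCount a (n + 1) ω ^ 2 ∂P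
      ≤ (1 + 1 / n) * ∫ ω, E.centeredCount a n ω ^ 2 ∂P + 1 := by
  have h_drift := E.integral_mul_stepDev hd hn ha (E.centeredCount_factorsThrough_history a n)
  simp_rw [← sq] at h_drift
  calc ∫ ω, E.centeredCount a (n + 1) ω ^ 2 ∂P
      ≤ ∫ ω, E.centeredCount a n ω ^ 2 ∂P
          + 2 * ∫ ω, E.centeredCount a n ω * E.stepDev a n ω ∂P + 1 := by
        simp_rw [E.centeredCount_succ]
        exact integral_add_sq_le (E.memLp_centeredCount a n 2)
          (E.aestronglyMeasurable_stepDev a n) (E.abs_stepDev_le_one a n)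
    _ = (1 + 2 * driftCoeff d p / n) * ∫ ω, E.centeredCount a n ω ^ 2 ∂P + 1 := by
        rw [h_drift]
        ring
    _ ≤ (1 + 1 / n) * ∫ ω, E.centeredCount a n ω ^ 2 ∂P + 1 := by
        gcongr
        linarith [driftCoeff_le_half hd hpd]

lemma integral_centeredCount_pow_four_succ_le (hd : 2 ≤ d)
    (hpd : p ≤ ((d : ℝ) + 1) / (2 * d)) {n : ℕ} (hn : 1 ≤ n) {a : G} (ha : a ∈ E.S) :
    ∫ ω, E.centeredCount a (n + 1) ω ^ 4 ∂P
      ≤ (1 + 2 / n) * ∫ ω, E.centeredCount a n ω ^ 4 ∂P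
        + 8 * ∫ ω, E.centeredCount a n ω ^ 2 ∂P + 3 := by
  have h_drift := E.integral_mul_stepDev hd hn ha
    ((E.centeredCount_factorsThrough_history a n).comp_left (· ^ 3))
  simp only [Function.comp_apply, ← pow_succ, Nat.reduceAdd] at h_drift
  calc ∫ ω, E.centeredCount a (n + 1) ω ^ 4 ∂P
      ≤ ∫ ω, E.centeredCount a n ω ^ 4 ∂P
          + 4 * ∫ ω, E.centeredCount a n ω ^ 3 * E.stepDev a n ω ∂P
          + 8 * ∫ ω, E.centeredCount a n ω ^ 2 ∂P + 3 := by
        simp_rw [E.centeredCount_succ]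
        exact integral_add_pow_four_le (E.memLp_centeredCount a n 4)
          (E.aestronglyMeasurable_stepDev a n) (E.abs_stepDev_le_one a n)
    _ = (1 + 4 * driftCoeff d p / n) * ∫ ω, E.centeredCount a n ω ^ 4 ∂P
          + 8 * ∫ ω, E.centeredCount a n ω ^ 2 ∂P + 3 := by
        rw [h_drift]
        ring
    _ ≤ (1 + 2 / n) * ∫ ω, E.centeredCount a n ω ^ 4 ∂P
          + 8 * ∫ ω, E.centeredCount a n ω ^ 2 ∂P + 3 := by
        gcongr
        linarith [driftCoeff_le_half hd hpd]

lemma integral_centeredCount_pow_four_le (hd : 2 ≤ d) (hpd : p ≤ ((d : ℝ) + 1) / (2 * d))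
    {n : ℕ} (hn : 1 ≤ n) {a : G} (ha : a ∈ E.S) :
    ∫ ω, E.centeredCount a n ω ^ 4 ∂P ≤ 4 * (n * harmonic n) ^ 2 := by
  have h_sq : ∀ k, 1 ≤ k → ∫ ω, E.centeredCount a k ω ^ 2 ∂P ≤ k * harmonic k := fun k hk =>
    le_mul_harmonic_of_succ_le (u := fun k => ∫ ω, E.centeredCount a k ω ^ 2 ∂P)
      (E.integral_centeredCount_one_pow_le_one a 2)
      (fun j hj => E.integral_centeredCount_sq_succ_le hd hpd hj ha) hk
  exact le_sq_mul_harmonic_of_succ_le (v := fun k => ∫ ω, E.centeredCount a k ω ^ 4 ∂P) h_sq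
    ((E.integral_centeredCount_one_pow_le_one a 4).trans (by norm_num))
    (fun j hj => E.integral_centeredCount_pow_four_succ_le hd hpd hj ha) hn

lemma integral_freqDev_pow_four_le (hd : 2 ≤ d) (hpd : p ≤ ((d : ℝ) + 1) / (2 * d))
    {n : ℕ} {a : G} (ha : a ∈ E.S) :
    ∫ ω, E.freqDev a n ω ^ 4 ∂P ≤ (2 * (harmonic n / n)) ^ 2 := by
  rcases n.eq_zero_or_pos with rfl | hn
  · simp [freqDev]
  have hn0 : (0 : ℝ) < n := by exact_mod_cast hn
  simp_rw [freqDev, div_pow]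
  rw [integral_div, div_le_iff₀ (pow_pos hn0 4)]
  calc ∫ ω, E.centeredCount a n ω ^ 4 ∂P ≤ 4 * (n * harmonic n) ^ 2 :=
        E.integral_centeredCount_pow_four_le hd hpd hn ha
    _ = (2 * (harmonic n / n)) ^ 2 * n ^ 4 := by
        field_simp
        ring

lemma memLp_freqDev (a : G) (n : ℕ) (q : ENNReal) : MemLp (E.freqDev a n) q P :=
  memLp_of_factorsThrough_finite (E.measurableSet_history_fiber n)
    ((E.centeredCount_factorsThrough_history a n).comp_left (· / (n : ℝ))) q

lemma integral_abs_freqDev_rpow_le (hd : 2 ≤ d) (hpd : p ≤ ((d : ℝ) + 1) / (2 * d))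
    (n : ℕ) {a : G} (ha : a ∈ E.S) {r m : ℝ} (hr0 : 0 ≤ r) (hr4 : r ≤ 4) (hrm : r ≤ m) :
    ∫ ω, |E.freqDev a n ω| ^ m ∂P ≤ (2 * (harmonic n / n)) ^ (r / 2) := by
  have hH : (0 : ℝ) ≤ 2 * (harmonic n / n) :=
    mul_nonneg two_pos.le (div_nonneg (cast_harmonic_nonneg n) n.cast_nonneg)
  calc ∫ ω, |E.freqDev a n ω| ^ m ∂P ≤ (∫ ω, E.freqDev a n ω ^ 4 ∂P) ^ (r / 4) :=
        integral_abs_rpow_le_of_abs_le_one (E.memLp_freqDev a n 4) (E.abs_freqDev_le_one a n)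
          hr0 hr4 hrm
    _ ≤ ((2 * (harmonic n / n)) ^ 2) ^ (r / 4) :=
        Real.rpow_le_rpow (integral_nonneg fun ω => Even.pow_nonneg (by decide) _)
          (E.integral_freqDev_pow_four_le hd hpd ha) (by linarith)
    _ = (2 * (harmonic n / n)) ^ (r / 2) := by
        rw [← Real.rpow_natCast, ← Real.rpow_mul hH]
        congr 1
        push_cast
        ring

lemma integrable_abs_freqDev_rpow (a : G) (n : ℕ) (m : ℝ) :
    Integrable (fun ω => |E.freqDev a n ω| ^ m) P :=
  (memLp_of_factorsThrough_finite (E.measurableSet_history_fiber n)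
    ((E.centeredCount_factorsThrough_history a n).comp_left fun z => |z / n| ^ m) 1).integrable
    le_rfl

lemma exists_summable_integral_abs_freqDev_rpow_le (hd : 2 ≤ d)
    (hpd : p ≤ ((d : ℝ) + 1) / (2 * d)) {m : ℝ} (hm : 2 < m) :
    ∃ c : ℕ → ℝ, Summable c ∧ ∀ k, ∀ a ∈ E.S, ∫ ω, |E.freqDev a k ω| ^ m ∂P ≤ c k := by
  have hr : 2 < min m 4 := lt_min hm (by norm_num)
  refine ⟨fun k => (2 * (harmonic k / k)) ^ (min m 4 / 2), ?_, fun k a ha =>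
    E.integral_abs_freqDev_rpow_le hd hpd k ha (by linarith) (min_le_right _ _) (min_le_left _ _)⟩
  have h_mul : ∀ k : ℕ, (2 * ((harmonic k : ℝ) / k)) ^ (min m 4 / 2)
      = 2 ^ (min m 4 / 2) * ((harmonic k : ℝ) / k) ^ (min m 4 / 2) := fun k =>
    Real.mul_rpow two_pos.le (div_nonneg (cast_harmonic_nonneg k) k.cast_nonneg)
  simp_rw [h_mul]
  exact (summable_harmonic_div_rpow (by linarith)).mul_left _

lemma integral_abs_Xi_rpow_le (n : ℕ) {m : ℝ} (hm : 1 ≤ m) :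
    ∫ ω, |E.Xi n ω| ^ m ∂P
      ≤ 1 / n * ∑ k ∈ Finset.range n, ∑ a ∈ E.S, ∫ ω, |E.freqDev a k ω| ^ m ∂P := by
  have h_inner : ∀ k, Integrable (fun ω => ∑ a ∈ E.S, |E.freqDev a k ω| ^ m) P := fun k =>
    integrable_finsetSum _ fun a _ => E.integrable_abs_freqDev_rpow a k m
  calc ∫ ω, |E.Xi n ω| ^ m ∂P
      ≤ ∫ ω, 1 / n * ∑ k ∈ Finset.range n, ∑ a ∈ E.S, |E.freqDev a k ω| ^ m ∂P :=
        integral_mono_of_nonneg (.of_forall fun ω => by positivity)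
          ((integrable_finsetSum _ fun k _ => h_inner k).const_mul _)
          (.of_forall fun ω => E.abs_Xi_rpow_le n ω hm)
    _ = 1 / n * ∑ k ∈ Finset.range n, ∑ a ∈ E.S, ∫ ω, |E.freqDev a k ω| ^ m ∂P := by
        rw [integral_const_mul, integral_finsetSum _ fun k _ => h_inner k]
        simp_rw [integral_finsetSum E.S fun a _ => E.integrable_abs_freqDev_rpow a _ m]

end Moments

end ERW

theorem erw_Xi_high_moments_subcritical_general
    {G : Type*} [Group G] [DecidableEq G] {Ω : Type*} [MeasurableSpace Ω]
    {P : Measure Ω} [IsProbabilityMeasure P] {d : ℕ} (hd : 2 ≤ d) {p : ℝ}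
    (hpd : p ≤ ((d : ℝ) + 1) / (2 * d)) (E : ERW G d p Ω P) {m : ℝ} (hm : 2 < m) :
    ∃ C : ℝ, 0 < C ∧ ∀ n : ℕ, 1 ≤ n → ∫ ω, |E.Xi n ω| ^ m ∂P ≤ C / n := by
  obtain ⟨c, hc_summable, hc⟩ := E.exists_summable_integral_abs_freqDev_rpow_le hd hpd hm
  obtain ⟨a₀, ha₀⟩ : E.S.Nonempty := Finset.card_pos.1 (by rw [E.card_S]; omega)
  have hc0 : ∀ k, 0 ≤ c k := fun k =>
    (integral_nonneg fun ω => by positivity).trans (hc k a₀ ha₀)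
  have hC : 0 ≤ d * ∑' k, c k := mul_nonneg d.cast_nonneg (tsum_nonneg hc0)
  refine ⟨d * ∑' k, c k + 1, by linarith, fun n _ => ?_⟩
  calc ∫ ω, |E.Xi n ω| ^ m ∂P
      ≤ 1 / n * ∑ k ∈ Finset.range n, ∑ a ∈ E.S, ∫ ω, |E.freqDev a k ω| ^ m ∂P :=
        E.integral_abs_Xi_rpow_le n (by linarith)
    _ ≤ 1 / n * ∑ k ∈ Finset.range n, d * c k := by
        gcongr with k
        exact (Finset.sum_le_card_nsmul _ _ _ (hc k)).trans_eq (by rw [E.card_S, nsmul_eq_mul])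
    _ ≤ 1 / n * (d * ∑' k, c k + 1) := by
        rw [← Finset.mul_sum]
        gcongr
        linarith [mul_le_mul_of_nonneg_left
          (hc_summable.sum_le_tsum (Finset.range n) fun k _ => hc0 k) d.cast_nonneg]
    _ = (d * ∑' k, c k + 1) / n := one_div_mul_eq_div _ _

/-- higher moments of `Ξ n` at or below criticality: if
`p ≤ p_d = (d+1)/(2d)` and `m > 2` then `E|Ξ n|^m ≤ C / n` for all `n ≥ 1`. -/
theorem erw_Xi_high_moments_subcritical
    {G : Type*} [Group G] [DecidableEq G] {Ω : Type*} [MeasurableSpace Ω]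
    {P : Measure Ω} [IsProbabilityMeasure P]
    (d : ℕ) (hd : 3 ≤ d) (p : ℝ) (hp0 : 0 ≤ p) (hp1 : p < 1)
    (hpd : p ≤ ((d : ℝ) + 1) / (2 * d))
    (E : ERW G d p Ω P) (m : ℝ) (hm : 2 < m) :
    ∃ C : ℝ, 0 < C ∧ ∀ n : ℕ, 1 ≤ n →
      ∫ ω, |E.Xi n ω| ^ m ∂P ≤ C / n := by
  exact erw_Xi_high_moments_subcritical_general (by omega) hpd E hm

end
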